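/- arXiv:0902.1312 — 2 statements merged into one kernel-verified Lean document; each statement's English description precedes it below -/
import Mathlib

section
/- Let H be a non-trivial subgroup of a finite group G, let μ be an irreducible character of H of maximal degree, and let k₊(G,H) be the number of irreducible characters of G not vanishing identically on H^#. Then k₊(G,H) ≤ (μ(1)|H| − μ(1))/(|H| − μ(1)) · max_{h∈H^#} |C_G(h)|. -/
open scoped BigOperators Classical

/-- `χ` is the character of some irreducible complex representation of `G`. -/
def IsIrrChar (G : Type) [Group G] [Fintype G] (χ : G → ℂ) : Prop :=
  ∃ V : FDRep ℂ G, CategoryTheory.Simple V ∧ ∀ g, χ g = V.character g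

/-- `θ` is a generalized (virtual) character: a `ℤ`-linear combination of irreducible characters. -/
def IsVirtualChar (G : Type) [Group G] [Fintype G] (θ : G → ℂ) : Prop :=
  ∃ (n : ℕ) (χ : Fin n → G → ℂ) (a : Fin n → ℤ),
    (∀ i, IsIrrChar G (χ i)) ∧ ∀ g, θ g = ∑ i, (a i : ℂ) * χ i g

/-- The regular character of `G`. -/
noncomputable def regChar (G : Type) [Group G] [Fintype G] : G → ℂ :=
  fun g => if g = 1 then (Fintype.card G : ℂ) else 0

/-- `G` is a Frobenius group with kernel `K` and complement `H`. -/
def IsFrobeniusWith {G : Type} [Group G] (K H : Subgroup G) : Prop :=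
  K.Normal ∧ K ≠ ⊥ ∧ H ≠ ⊥ ∧ K.IsComplement' H ∧
    ∀ h ∈ H, h ≠ 1 → ∀ k ∈ K, h * k * h⁻¹ = k → k = 1


theorem rep_induct (A : Type) [Group A] [Fintype A] (P : (A → ℂ) → Prop) (h0 : P 0)
    (hadd : ∀ f g, P f → P g → P (f + g))
    (hirr : ∀ (V : Type) [AddCommGroup V] [Module ℂ V] [FiniteDimensional ℂ V]
      (ρ : Representation ℂ A V), ρ.IsIrreducible → P ρ.character) :
    ∀ (n : ℕ) (V : Type) [AddCommGroup V] [Module ℂ V] [FiniteDimensional ℂ V]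
      (ρ : Representation ℂ A V), Module.finrank ℂ V = n → P ρ.character := by
  intro n
  induction n using Nat.strong_induction_on with
  | _ n ih =>
    intro V _ _ _ ρ hn
    by_cases hi : ρ.IsIrreducible
    · exact hirr V ρ hi
    by_cases hs : Subsingleton V
    · have : ρ.character = 0 := by
        ext g
        have : ρ g = 0 := Subsingleton.elim _ _
        simp [Representation.character, this]
      rw [this]; exact h0
    have hnt : Nontrivial V := not_subsingleton_iff_nontrivial.mp hs
    have hnt' : Nontrivial (Subrepresentation ρ) := by
      refine ⟨⊥, ⊤, fun h => ?_⟩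
      have := congrArg Subrepresentation.toSubmodule h
      exact bot_ne_top (α := Submodule ℂ V) this
    have : ∃ p : Subrepresentation ρ, p ≠ ⊥ ∧ p ≠ ⊤ := by
      by_contra hc
      push Not at hc
      apply hi
      exact { eq_bot_or_eq_top := fun p => by
                by_cases hp : p = ⊥
                · exact Or.inl hp
                · exact Or.inr (hc p hp) }
    obtain ⟨p, hp0, hp1⟩ := this
    obtain ⟨q, hpq⟩ := exists_isCompl p
    have hc : IsCompl p.toSubmodule q.toSubmodule := by
      constructor
      · rw [disjoint_iff]
        have := congrArg Subrepresentation.toSubmodule (disjoint_iff.mp hpq.1)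
        exact this
      · rw [codisjoint_iff]
        have := congrArg Subrepresentation.toSubmodule (codisjoint_iff.mp hpq.2)
        exact this
    have hsum := Submodule.finrank_add_eq_of_isCompl hc
    have hpb : p.toSubmodule ≠ ⊥ := fun h => hp0 (Subrepresentation.toSubmodule_injective h)
    have hpt : p.toSubmodule ≠ ⊤ := fun h => hp1 (Subrepresentation.toSubmodule_injective h)
    have h1 : Module.finrank ℂ p.toSubmodule < n := hn ▸ Submodule.finrank_lt hpt
    have h2 : Module.finrank ℂ p.toSubmodule ≠ 0 := by
      rw [Ne, Submodule.finrank_eq_zero]; exact hpb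
    have hch : ρ.character = p.toRepresentation.character + q.toRepresentation.character := by
      ext g
      simp only [Representation.character, Pi.add_apply]
      rw [← LinearMap.trace_prodMap', ← LinearMap.trace_conj' _ (Submodule.prodEquivOfIsCompl _ _ hc)]
      congr 1
      ext v
      obtain ⟨w, rfl⟩ := (Submodule.prodEquivOfIsCompl _ _ hc).surjective v
      simp [LinearEquiv.conj_apply, Subrepresentation.toRepresentation]
    rw [hch]
    refine hadd _ _ (ih _ h1 _ _ rfl) (ih _ ?_ _ _ rfl)
    omega

theorem rep_induct' (A : Type) [Group A] [Fintype A] (P : (A → ℂ) → Prop) (h0 : P 0)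
    (hadd : ∀ f g, P f → P g → P (f + g))
    (hirr : ∀ (V : Type) [AddCommGroup V] [Module ℂ V] [FiniteDimensional ℂ V]
      (ρ : Representation ℂ A V), ρ.IsIrreducible → P ρ.character)
    (V : Type) [AddCommGroup V] [Module ℂ V] [FiniteDimensional ℂ V]
      (ρ : Representation ℂ A V) : P ρ.character :=
  rep_induct A P h0 hadd hirr _ V ρ rfl

/-- restriction to the cyclic group. -/
theorem char_basic (A : Type) [Group A] [Fintype A] (V : Type) [AddCommGroup V] [Module ℂ V]
    [FiniteDimensional ℂ V] (ρ : Representation ℂ A V) (g : A) :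
    ρ.character g⁻¹ = star (ρ.character g) ∧ ‖ρ.character g‖ ≤ Module.finrank ℂ V := by
  let Z := Subgroup.zpowers g
  let γ : Z := ⟨g, Subgroup.mem_zpowers g⟩
  have key := rep_induct' Z (fun f => f γ⁻¹ = star (f γ) ∧ (∃ n : ℕ, f 1 = n ∧ ‖f γ‖ ≤ n))
    ⟨by simp, 0, by simp, by simp⟩ (by
      rintro f f' ⟨h1, n, h2, h3⟩ ⟨h1', n', h2', h3'⟩
      refine ⟨by simp [h1, h1'], n + n', by simp [h2, h2'], ?_⟩
      push_cast
      exact (norm_add_le _ _).trans (add_le_add h3 h3'))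
    (by
      intro V _ _ _ ρ hi
      have hfr := Representation.IsIrreducible.finrank_eq_one_of_isMulCommutative ρ
      have hsc : ∀ x : Z, ∃ c : ℂ, ρ x = c • LinearMap.id := by
        intro x
        obtain ⟨v, hv, hv'⟩ := finrank_eq_one_iff'.mp hfr
        obtain ⟨c, hc⟩ := hv' (ρ x v)
        refine ⟨c, LinearMap.ext fun w => ?_⟩
        obtain ⟨b, rfl⟩ := hv' w
        simp [← hc, smul_comm b c]
      have htr : LinearMap.trace ℂ V LinearMap.id = 1 := by
        rw [LinearMap.trace_id, hfr]; simp
      have hmul : ∀ x : Z, ρ x = ρ.character x • LinearMap.id := by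
        intro x
        obtain ⟨c, hc⟩ := hsc x
        have : ρ.character x = c := by
          rw [Representation.character, hc, map_smul, htr]; simp
        rw [this, hc]
      have h1 : ρ.character 1 = 1 := by rw [Representation.char_one, hfr]; simp
      have hm : ∀ x y : Z, ρ.character (x * y) = ρ.character x * ρ.character y := by
        intro x y
        conv_lhs => rw [Representation.character, map_mul, hmul x, hmul y]
        rw [smul_mul_smul_comm, map_smul]
        have : LinearMap.trace ℂ V (LinearMap.id * LinearMap.id) = 1 := htr
        rw [this]; simp
      let F : Z →* ℂ := ⟨⟨ρ.character, h1⟩, hm⟩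
      have hF : ∀ x, F x = ρ.character x := fun _ => rfl
      have hn : ‖F γ‖ = 1 := by
        have : F γ ^ (Fintype.card Z) = 1 := by
          rw [← map_pow, pow_card_eq_one, map_one]
        exact Complex.norm_eq_one_of_pow_eq_one this Fintype.card_ne_zero
      refine ⟨?_, 1, by simpa using h1, by simp [← hF, hn]⟩
      have h3 : F γ⁻¹ * F γ = 1 := by rw [← map_mul]; simp
      rw [← hF, ← hF]
      have h4 : star (F γ) * F γ = 1 := by
        have := Complex.conj_mul' (F γ)
        rw [hn] at this; simpa using this
      have hne : F γ ≠ 0 := by intro h; simp [h] at hn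
      exact mul_right_cancel₀ hne (h3.trans h4.symm))
    V (ρ.comp Z.subtype)
  obtain ⟨h1, n, h2, h3⟩ := key
  refine ⟨h1, ?_⟩
  have : ((Module.finrank ℂ V : ℕ) : ℂ) = n := by
    rw [← h2, Representation.char_one]
  have h5 : Module.finrank ℂ V = n := by exact_mod_cast this
  rw [h5]; exact h3

theorem irr_of_rep (A : Type) [Group A] [Fintype A] (V : Type) [AddCommGroup V] [Module ℂ V]
    [FiniteDimensional ℂ V] (ρ : Representation ℂ A V) (h : ρ.IsIrreducible) :
    IsIrrChar A ρ.character := by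
  refine ⟨FDRep.of ρ, ?_, fun g => rfl⟩
  rw [FDRep.simple_iff_char_is_norm_one]
  have := invertibleOfNonzero (NeZero.ne (Nat.card A : ℂ))
  have := Representation.char_orthonormal ρ ρ
  rw [if_pos ⟨Representation.Equiv.refl ρ⟩] at this
  have hne := (NeZero.ne (Nat.card A : ℂ))
  have h2 : ∑ g : A, ρ.character g * ρ.character g⁻¹ = (Nat.card A : ℂ) := by
    field_simp at this
    exact this
  exact h2

theorem decomp (A : Type) [Group A] [Fintype A] (V : Type) [AddCommGroup V] [Module ℂ V]
    [FiniteDimensional ℂ V] (ρ : Representation ℂ A V) :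
    ∃ l : Multiset (A → ℂ), (∀ ψ ∈ l, IsIrrChar A ψ) ∧ ρ.character = l.sum := by
  apply rep_induct' A (fun f => ∃ l : Multiset (A → ℂ), (∀ ψ ∈ l, IsIrrChar A ψ) ∧ f = l.sum)
  · exact ⟨0, by simp, by simp⟩
  · rintro f g ⟨l, h1, rfl⟩ ⟨l', h1', rfl⟩
    refine ⟨l + l', ?_, by simp⟩
    intro ψ h
    rcases Multiset.mem_add.mp h with h | h
    · exact h1 _ h
    · exact h1' _ h
  · intro V _ _ _ ρ h
    exact ⟨{ρ.character}, by simpa using irr_of_rep A V ρ h, by simp⟩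

theorem irr_orth (A : Type) [Group A] [Fintype A] (ψ φ : A → ℂ) (h1 : IsIrrChar A ψ)
    (h2 : IsIrrChar A φ) :
    ∑ g : A, ψ g * star (φ g) = if ψ = φ then (Fintype.card A : ℂ) else 0 := by
  obtain ⟨V, hV, h1⟩ := h1
  obtain ⟨W, hW, h2⟩ := h2
  have hne := (NeZero.ne (Nat.card A : ℂ))
  have := invertibleOfNonzero (NeZero.ne (Nat.card A : ℂ))
  have hW' : ∀ g, star (φ g) = W.character g⁻¹ := fun g => by
    rw [h2]; exact ((char_basic A W W.ρ g).1).symm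
  simp_rw [hW', h1]
  have eq1 : ψ = V.character := funext h1
  have eq2 : φ = W.character := funext h2
  split_ifs with h
  · have hn := (FDRep.simple_iff_char_is_norm_one V).mp hV
    rw [← eq2, ← h, eq1, hn, Nat.card_eq_fintype_card]
  · have := FDRep.char_orthonormal V W
    rw [if_neg] at this
    · simpa [hne] using this
    · rintro ⟨i⟩
      exact h (by rw [eq1, eq2, FDRep.char_iso i])

noncomputable def regRep (A : Type) [Group A] : Representation ℂ A (A → ℂ) where
  toFun g := LinearMap.funLeft ℂ ℂ (fun x => x * g)
  map_one' := by ext; simp [LinearMap.funLeft]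
  map_mul' g h := by ext; simp [LinearMap.funLeft, mul_assoc]

theorem regRep_char (A : Type) [Group A] [Fintype A] (g : A) :
    (regRep A).character g = if g = 1 then (Fintype.card A : ℂ) else 0 := by
  rw [Representation.character, LinearMap.trace_eq_matrix_trace ℂ (Pi.basisFun ℂ A), Matrix.trace]
  simp only [Matrix.diag, LinearMap.toMatrix_apply, Pi.basisFun_repr, Pi.basisFun_apply]
  simp [regRep, LinearMap.funLeft, Pi.single_apply]

theorem inner_exp {A ι : Type} [Fintype A] [Fintype ι] [DecidableEq ι] (n : ℂ) (φ : ι → A → ℂ)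
    (orth : ∀ i j, ∑ g, φ i g * star (φ j g) = if i = j then n else 0)
    (r : ι → ℂ) (i : ι) : ∑ g, (∑ j, r j * φ j g) * star (φ i g) = n * r i := by
  simp_rw [Finset.sum_mul]
  rw [Finset.sum_comm]
  have : ∀ j, ∑ g, r j * φ j g * star (φ i g) = if j = i then n * r i else 0 := by
    intro j
    simp_rw [mul_assoc]
    rw [← Finset.mul_sum, orth]
    split_ifs with h
    · subst h; ring
    · simp
  rw [Finset.sum_congr rfl fun j _ => this j]; simp

theorem parseval {A ι : Type} [Fintype A] [Fintype ι] [DecidableEq ι] (n : ℝ) (φ : ι → A → ℂ)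
    (orth : ∀ i j, ∑ g, φ i g * star (φ j g) = if i = j then (n : ℂ) else 0)
    (r : ι → ℝ) : ∑ g, ‖∑ j, (r j : ℂ) * φ j g‖ ^ 2 = n * ∑ j, r j ^ 2 := by
  have h : ∀ g, ((‖∑ j, (r j : ℂ) * φ j g‖ ^ 2 : ℝ) : ℂ)
      = ∑ i, (r i : ℂ) * ((∑ j, (r j : ℂ) * φ j g) * star (φ i g)) := by
    intro g
    have : ((‖∑ j, (r j : ℂ) * φ j g‖ ^ 2 : ℝ) : ℂ)
        = (∑ j, (r j : ℂ) * φ j g) * star (∑ j, (r j : ℂ) * φ j g) := by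
      rw [Complex.ofReal_pow]; exact (Complex.mul_conj' _).symm
    rw [this, star_sum, Finset.mul_sum]
    refine Finset.sum_congr rfl fun i _ => ?_
    simp only [star_mul', Complex.star_def, Complex.conj_ofReal]
    ring
  have : ((∑ g, ‖∑ j, (r j : ℂ) * φ j g‖ ^ 2 : ℝ) : ℂ) = ((n * ∑ j, r j ^ 2 : ℝ) : ℂ) := by
    rw [Complex.ofReal_sum]
    simp_rw [h]
    rw [Finset.sum_comm]
    simp_rw [← Finset.mul_sum, inner_exp (n : ℂ) φ orth (fun j => (r j : ℂ))]
    push_cast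
    rw [Finset.mul_sum]
    refine Finset.sum_congr rfl fun i _ => by ring
  exact_mod_cast this

theorem core_abs {A ι : Type} [Fintype A] [Fintype ι] [DecidableEq ι] (n : ℝ) (hn : 0 < n) (e : A)
    (φ : ι → A → ℂ) (dg : ι → ℕ) (D : ℕ) (χ : A → ℂ) (m b : ι → ℤ) (i0 : ι)
    (orth : ∀ i j, ∑ g, φ i g * star (φ j g) = if i = j then (n : ℂ) else 0)
    (bnd : ∀ i g, ‖φ i g‖ ≤ dg i) (one : ∀ i, φ i e = dg i)
    (reg : ∀ g, ∑ i, (dg i : ℂ) * φ i g = if g = e then (n : ℂ) else 0)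
    (hexp : ∀ g, χ g = ∑ i, (m i : ℂ) * φ i g)
    (hexp2 : ∀ g, χ g * star (χ g) = ∑ i, (b i : ℂ) * φ i g)
    (triv : ∀ g, φ i0 g = 1) (hdg : ∀ i, 1 ≤ dg i) (hD : ∀ i, dg i ≤ D)
    (hne : ∃ h, h ≠ e ∧ χ h ≠ 0) :
    n - D ≤ D * ∑ g ∈ Finset.univ.filter (fun g => g ≠ e), ‖χ g‖ ^ 2 := by
  obtain ⟨h, hhe, hh⟩ := hne
  set Q := ∑ g ∈ Finset.univ.filter (fun g => g ≠ e), ‖χ g‖ ^ 2 with hQ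
  have hdg0 : dg i0 = 1 := by
    have := one i0; rw [triv] at this; exact_mod_cast this.symm
  have hD1 : (1 : ℝ) ≤ D := by exact_mod_cast (hdg i0).trans (hD i0)
  have hDr : ∀ i, (dg i : ℝ) ≤ D := fun i => by exact_mod_cast hD i
  have hdgr : ∀ i, (1 : ℝ) ≤ dg i := fun i => by exact_mod_cast hdg i
  -- sum of squares
  have hsq : ∑ i, (dg i : ℝ) ^ 2 = n := by
    have := reg e
    simp only [one, if_true] at this
    have h2 : ((∑ i, (dg i : ℝ) ^ 2 : ℝ) : ℂ) = (n : ℂ) := by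
      rw [← this]; push_cast; exact Finset.sum_congr rfl fun i _ => by ring
    exact_mod_cast h2
  -- the integers c i
  let c : ι → ℤ := fun i => b i0 * dg i - b i
  have hb : ∀ i, n * (b i : ℝ) = ∑ g, ‖χ g‖ ^ 2 * (φ i g).re := by
    intro i
    have h1 := inner_exp (n : ℂ) φ orth (fun j => (b j : ℂ)) i
    simp_rw [← hexp2] at h1
    have h2 := congrArg Complex.re h1
    have h3 : ((n : ℂ) * (b i : ℂ)).re = n * (b i : ℝ) := by simp
    rw [h3] at h2
    rw [← h2, Complex.re_sum]
    refine Finset.sum_congr rfl fun g _ => ?_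
    have : χ g * star (χ g) = ((‖χ g‖ ^ 2 : ℝ) : ℂ) := by
      rw [Complex.ofReal_pow]; exact (Complex.mul_conj' _)
    rw [this, Complex.re_ofReal_mul]; simp
  have hc : ∀ i, n * (c i : ℝ) = ∑ g, ‖χ g‖ ^ 2 * (dg i - (φ i g).re) := by
    intro i
    have h1 : n * (c i : ℝ) = (n * b i0) * dg i - n * b i := by
      simp only [c]; push_cast; ring
    rw [h1, hb, hb, Finset.sum_mul, ← Finset.sum_sub_distrib]
    refine Finset.sum_congr rfl fun g _ => ?_
    rw [triv]; simp; ring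
  have hterm : ∀ i g, 0 ≤ ‖χ g‖ ^ 2 * (dg i - (φ i g).re) := by
    intro i g
    have := (Complex.re_le_norm (φ i g)).trans (bnd i g)
    exact mul_nonneg (sq_nonneg _) (by linarith)
  have hc0 : ∀ i, 0 ≤ c i := by
    intro i
    have h1 : 0 ≤ n * (c i : ℝ) := by rw [hc]; exact Finset.sum_nonneg fun g _ => hterm i g
    have h2 : 0 ≤ (c i : ℝ) := nonneg_of_mul_nonneg_right h1 hn
    exact_mod_cast h2
  have hcQ : ∑ i, (c i : ℝ) * dg i = Q := by
    have h1 : n * ∑ i, (c i : ℝ) * dg i = n * Q := by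
      rw [Finset.mul_sum]
      simp_rw [← mul_assoc, hc, Finset.sum_mul]
      rw [Finset.sum_comm, hQ, Finset.sum_filter, Finset.mul_sum]
      refine Finset.sum_congr rfl fun g _ => ?_
      have h2 : ∑ i, (dg i : ℝ) * (φ i g).re = if g = e then n else 0 := by
        have := congrArg Complex.re (reg g)
        rw [Complex.re_sum] at this
        simp only [← Complex.ofReal_natCast, Complex.re_ofReal_mul] at this
        rw [this]; split_ifs <;> simp
      have h3 : ∑ i, ‖χ g‖ ^ 2 * (dg i - (φ i g).re) * dg i
          = ‖χ g‖ ^ 2 * (∑ i, (dg i : ℝ) ^ 2 - ∑ i, (dg i : ℝ) * (φ i g).re) := by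
        rw [← Finset.sum_sub_distrib, Finset.mul_sum]
        exact Finset.sum_congr rfl fun i _ => by ring
      rw [h3, h2, hsq]
      by_cases hg : g = e <;> simp [hg]; ring
    exact mul_left_cancel₀ hn.ne' h1
  let Z : Finset ι := Finset.univ.filter (fun i => c i = 0)
  set z := ∑ i ∈ Z, (dg i : ℝ) ^ 2 with hz
  have hcase1 : n - z ≤ D * Q := by
    have h1 : n - z = ∑ i, if c i = 0 then 0 else (dg i : ℝ) ^ 2 := by
      rw [← hsq, hz, Finset.sum_filter, ← Finset.sum_sub_distrib]
      exact Finset.sum_congr rfl fun i _ => by split_ifs <;> simp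
    rw [h1, ← hcQ, Finset.mul_sum]
    refine Finset.sum_le_sum fun i _ => ?_
    have h0 : (0 : ℝ) ≤ c i := by exact_mod_cast hc0 i
    split_ifs with hci
    · have := hdgr i
      positivity
    · have h2 : (1 : ℝ) ≤ c i := by
        have := hc0 i
        have : 1 ≤ c i := by omega
        exact_mod_cast this
      have h3 := hDr i
      have h4 := hdgr i
      calc (dg i : ℝ) ^ 2 = dg i * (1 * dg i) := by ring
        _ ≤ D * (c i * dg i) := by gcongr
  by_cases hzD : z ≤ D
  · linarith
  push Not at hzD
  -- second case
  let T : Finset A := Finset.univ.filter (fun g => g = e ∨ χ g ≠ 0)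
  have hZT : ∀ i ∈ Z, ∀ g ∈ T, φ i g = dg i := by
    intro i hi g hg
    have hi : c i = 0 := by simpa [Z] using hi
    have hg : g = e ∨ χ g ≠ 0 := by simpa [T] using hg
    rcases hg with rfl | hg
    · exact one i
    have h1 := hc i
    rw [hi, Int.cast_zero, mul_zero, eq_comm,
      Finset.sum_eq_zero_iff_of_nonneg fun g _ => hterm i g] at h1
    have h2 := h1 g (Finset.mem_univ _)
    have h3 : ‖χ g‖ ^ 2 ≠ 0 := by simpa using hg
    have h4 : (φ i g).re = dg i := by
      rcases mul_eq_zero.mp h2 with h | h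
      · exact absurd h h3
      · linarith
    have h5 := bnd i g
    have h6 : (φ i g).re ^ 2 + (φ i g).im ^ 2 ≤ (dg i : ℝ) ^ 2 := by
      have := Complex.sq_norm (φ i g)
      rw [Complex.normSq_apply] at this
      nlinarith [norm_nonneg (φ i g)]
    have h7 : (φ i g).im = 0 := by
      rw [h4] at h6
      have : (φ i g).im ^ 2 = 0 := le_antisymm (by linarith) (sq_nonneg _)
      simpa using this
    apply Complex.ext <;> simp [h4, h7]
  let a : ι → ℤ := fun i => m i - m i0 * dg i
  let θ : A → ℂ := fun g => ∑ i, ((a i : ℝ) : ℂ) * φ i g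
  have hθ : ∀ g, g ≠ e → θ g = χ g := by
    intro g hg
    have : θ g = χ g - m i0 * ∑ i, (dg i : ℂ) * φ i g := by
      simp only [θ, a]
      rw [hexp, Finset.mul_sum, ← Finset.sum_sub_distrib]
      refine Finset.sum_congr rfl fun i _ => ?_
      push_cast; ring
    rw [this, reg, if_neg hg]; simp
  have hθT : ∀ g, g ∉ T → θ g = 0 := by
    intro g hg
    have hg : ¬ (g = e ∨ χ g ≠ 0) := by simpa [T] using hg
    push Not at hg
    rw [hθ g hg.1, hg.2]
  have hθe : θ e = ((∑ i, (a i : ℝ) * dg i : ℝ) : ℂ) := by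
    simp only [θ, one]; push_cast; rfl
  have hin := inner_exp (n : ℂ) φ orth (fun i => ((a i : ℝ) : ℂ))
  have ha0 : a i0 = 0 := by simp [a, hdg0]
  have haZ : ∀ i ∈ Z, a i = 0 := by
    intro i hi
    have h1 : ∑ g, θ g * star (φ i g) = dg i * ∑ g, θ g * star (φ i0 g) := by
      rw [Finset.mul_sum]
      refine Finset.sum_congr rfl fun g _ => ?_
      by_cases hg : g ∈ T
      · rw [hZT i hi g hg, triv]; simp; ring
      · simp [hθT g hg]
    have h2 := hin i
    have h3 := hin i0
    change ∑ g, θ g * star (φ i g) = _ at h2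
    change ∑ g, θ g * star (φ i0 g) = _ at h3
    rw [h1, h3, ha0] at h2
    have hn' : (n : ℂ) ≠ 0 := by exact_mod_cast hn.ne'
    simpa [hn'] using h2
  let S : Finset ι := Finset.univ.filter (fun i => a i ≠ 0)
  set w := ∑ i ∈ S, (dg i : ℝ) ^ 2 with hw
  set N := ∑ i, (a i : ℝ) ^ 2 with hN
  have hpar : ∑ g, ‖θ g‖ ^ 2 = n * N := parseval n φ orth (fun i => (a i : ℝ))
  have hNS : N = ∑ i ∈ S, (a i : ℝ) ^ 2 := by
    rw [hN, Finset.sum_filter]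
    refine Finset.sum_congr rfl fun i _ => ?_
    by_cases hi : a i = 0 <;> simp [hi]
  have hNpos : 0 < N := by
    by_contra hcon
    have hN0 : N = 0 := le_antisymm (not_lt.mp hcon) (Finset.sum_nonneg fun i _ => sq_nonneg _)
    rw [hN0, mul_zero, Finset.sum_eq_zero_iff_of_nonneg fun g _ => sq_nonneg _] at hpar
    have := hpar h (Finset.mem_univ _)
    rw [hθ h hhe] at this
    exact hh (by simpa using this)
  have hCS : (∑ i, |(a i : ℝ)| * dg i) ^ 2 ≤ N * w := by
    have h1 : ∑ i, |(a i : ℝ)| * dg i = ∑ i ∈ S, |(a i : ℝ)| * dg i := by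
      rw [Finset.sum_filter]
      refine Finset.sum_congr rfl fun i _ => ?_
      by_cases hi : a i = 0 <;> simp [hi]
    rw [h1, hNS, hw]
    have := Finset.sum_mul_sq_le_sq_mul_sq S (fun i => |(a i : ℝ)|) (fun i => (dg i : ℝ))
    simpa using this
  have hθb : ∀ g, ‖θ g‖ ^ 2 ≤ N * w := by
    intro g
    refine le_trans ?_ hCS
    have : ‖θ g‖ ≤ ∑ i, |(a i : ℝ)| * dg i := by
      refine (norm_sum_le _ _).trans (Finset.sum_le_sum fun i _ => ?_)
      rw [norm_mul, Complex.norm_real, Real.norm_eq_abs]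
      exact mul_le_mul_of_nonneg_left (bnd i g) (abs_nonneg _)
    exact pow_le_pow_left₀ (norm_nonneg _) this 2
  have hTw : n ≤ T.card * w := by
    have h1 : n * N ≤ (T.card * w) * N := by
      rw [← hpar]
      have : ∑ g, ‖θ g‖ ^ 2 = ∑ g ∈ T, ‖θ g‖ ^ 2 := by
        symm
        refine Finset.sum_subset (Finset.subset_univ _) fun g _ hg => ?_
        simp [hθT g hg]
      rw [this]
      refine (Finset.sum_le_card_nsmul T _ (N * w) fun g _ => hθb g).trans ?_
      rw [nsmul_eq_mul]; apply le_of_eq; ring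
    exact le_of_mul_le_mul_right h1 hNpos
  have hzpos : 0 < z := by linarith
  have hTz : T.card * z ≤ n := by
    have h1 := parseval n φ orth (fun i => if i ∈ Z then (dg i : ℝ) else 0)
    have h2 : ∑ j, (if j ∈ Z then (dg j : ℝ) else 0) ^ 2 = z := by
      have : ∀ j, (if j ∈ Z then (dg j : ℝ) else 0) ^ 2
          = if j ∈ Z then (dg j : ℝ) ^ 2 else 0 := fun j => by split_ifs <;> simp
      simp_rw [this]
      rw [Finset.sum_ite_mem, Finset.univ_inter]
    rw [h2] at h1
    have h3 : ∀ g ∈ T,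
        ‖∑ j, ((if j ∈ Z then (dg j : ℝ) else 0 : ℝ) : ℂ) * φ j g‖ ^ 2 = z ^ 2 := by
      intro g hg
      have : ∑ j, ((if j ∈ Z then (dg j : ℝ) else 0 : ℝ) : ℂ) * φ j g = (z : ℂ) := by
        have h4 : ∀ j, ((if j ∈ Z then (dg j : ℝ) else 0 : ℝ) : ℂ) * φ j g
            = if j ∈ Z then ((dg j : ℂ)) ^ 2 else 0 := fun j => by
          split_ifs with hj
          · rw [hZT j hj g hg]; push_cast; ring
          · simp
        simp_rw [h4]
        rw [Finset.sum_ite_mem, Finset.univ_inter, hz]; push_cast; rfl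
      rw [this, Complex.norm_real, Real.norm_eq_abs, sq_abs]
    have h5 : T.card * z ^ 2 ≤ n * z := by
      rw [← h1]
      calc T.card * z ^ 2 = ∑ g ∈ T, z ^ 2 := by simp
        _ = ∑ g ∈ T, ‖∑ j, ((if j ∈ Z then (dg j : ℝ) else 0 : ℝ) : ℂ) * φ j g‖ ^ 2 :=
          (Finset.sum_congr rfl h3).symm
        _ ≤ _ := Finset.sum_le_sum_of_subset_of_nonneg (Finset.subset_univ _)
          fun g _ _ => sq_nonneg _
    refine le_of_mul_le_mul_right (a := z) ?_ hzpos
    linarith [h5, (by ring : (T.card : ℝ) * z ^ 2 = T.card * z * z)]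
  have hzw : z ≤ w := by
    have hTpos : (0 : ℝ) < T.card := by
      have : e ∈ T := by simp [T]
      exact_mod_cast Finset.card_pos.mpr ⟨e, this⟩
    exact le_of_mul_le_mul_left (hTz.trans hTw) hTpos
  have hwz : w + z ≤ n := by
    rw [← hsq, hw, hz, ← Finset.sum_union]
    · exact Finset.sum_le_sum_of_subset_of_nonneg (Finset.subset_univ _) fun i _ _ => sq_nonneg _
    · rw [Finset.disjoint_left]
      intro i hi hi'
      have : a i ≠ 0 := by simpa [S] using hi
      exact this (haZ i hi')
  have hQN : (n - w) * N ≤ Q := by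
    have h1 : Q = n * N - ‖θ e‖ ^ 2 := by
      rw [← hpar, hQ, Finset.filter_ne', ← Finset.sum_erase_add _ _ (Finset.mem_univ e)]
      rw [add_sub_cancel_right]
      exact Finset.sum_congr rfl fun g hg => by rw [hθ g (Finset.ne_of_mem_erase hg)]
    have := hθb e
    rw [h1]; linarith
  have hNw : w ≤ (D : ℝ) ^ 2 * N := by
    rw [hw, hNS, Finset.mul_sum]
    refine Finset.sum_le_sum fun i hi => ?_
    have h1 : a i ≠ 0 := by simpa [S] using hi
    have h2 : (1 : ℝ) ≤ (a i : ℝ) ^ 2 := by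
      have : 1 ≤ (a i) ^ 2 := by
        have := pow_pos (abs_pos.mpr h1) 2
        rw [sq_abs] at this; omega
      exact_mod_cast this
    have h3 := hDr i
    calc (dg i : ℝ) ^ 2 = (dg i : ℝ) ^ 2 * 1 := by ring
      _ ≤ (D : ℝ) ^ 2 * (a i : ℝ) ^ 2 := by gcongr
  have hfin : D * (n - D) ≤ D * (D * Q) := by
    have h1 : D * (n - D) ≤ w * (n - w) := by nlinarith
    have h2 : 0 ≤ n - w := by linarith
    have h3 : w * (n - w) ≤ (D : ℝ) ^ 2 * N * (n - w) := mul_le_mul_of_nonneg_right hNw h2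
    have h4 : (D : ℝ) ^ 2 * ((n - w) * N) ≤ (D : ℝ) ^ 2 * Q :=
      mul_le_mul_of_nonneg_left hQN (by positivity)
    nlinarith
  exact le_of_mul_le_mul_left hfin (by linarith)

theorem irr_triv (A : Type) [Group A] [Fintype A] : IsIrrChar A (fun _ => 1) := by
  have hc : ∀ g, (FDRep.of (1 : Representation ℂ A ℂ)).character g = 1 := by
    intro g
    change LinearMap.trace ℂ ℂ (1 : ℂ →ₗ[ℂ] ℂ) = 1
    rw [LinearMap.trace_one]; simp
  refine ⟨FDRep.of (1 : Representation ℂ A ℂ), ?_, fun g => (hc g).symm⟩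
  rw [FDRep.simple_iff_char_is_norm_one]
  simp_rw [hc]
  simp

theorem irr_finite (A : Type) [Group A] [Fintype A] : {ψ : A → ℂ | IsIrrChar A ψ}.Finite := by
  have hl : LinearIndependent ℂ (fun ψ : {ψ : A → ℂ | IsIrrChar A ψ} => (ψ : A → ℂ)) := by
    rw [linearIndependent_iff']
    intro s c hc i hi
    have h1 : ∑ g, (∑ j ∈ s, c j • (j : A → ℂ)) g * star ((i : A → ℂ) g) = 0 := by
      rw [hc]; simp
    simp only [Finset.sum_apply, Pi.smul_apply, smul_eq_mul, Finset.sum_mul] at h1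
    rw [Finset.sum_comm] at h1
    have h2 : ∀ j ∈ s, ∑ g, c j * (j : A → ℂ) g * star ((i : A → ℂ) g)
        = if j = i then c i * (Fintype.card A : ℂ) else 0 := by
      intro j _
      simp_rw [mul_assoc]
      rw [← Finset.mul_sum, irr_orth A _ _ j.2 i.2]
      by_cases hji : j = i
      · simp [hji]
      · have : (j : A → ℂ) ≠ i := fun h => hji (Subtype.ext h)
        simp [hji, this]
    rw [Finset.sum_congr rfl h2] at h1
    simpa [hi] using h1
  exact hl.setFinite

theorem irr_deg (A : Type) [Group A] [Fintype A] (ψ : A → ℂ) (h : IsIrrChar A ψ) :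
    ∃ n : ℕ, 1 ≤ n ∧ ψ 1 = n ∧ ∀ g, ‖ψ g‖ ≤ n := by
  have ho := irr_orth A ψ ψ h h
  obtain ⟨V, hV, h1⟩ := h
  have hb : ∀ g, ‖ψ g‖ ≤ Module.finrank ℂ V := fun g => by
    rw [h1]; exact (char_basic A V V.ρ g).2
  refine ⟨Module.finrank ℂ V, ?_, by rw [h1]; exact FDRep.char_one V, hb⟩
  by_contra hcon
  have h0 : Module.finrank ℂ V = 0 := by omega
  have : ∀ g, ψ g = 0 := fun g => by
    have := hb g
    rw [h0] at this
    simpa using this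
  have hn : (Fintype.card A : ℂ) ≠ 0 := by exact_mod_cast Fintype.card_ne_zero
  simp only [this, zero_mul, Finset.sum_const_zero, if_true] at ho
  exact hn ho.symm

theorem decomp' (A : Type) [Group A] [Fintype A] [Fintype {ψ : A → ℂ // IsIrrChar A ψ}]
    (V : Type) [AddCommGroup V] [Module ℂ V]
    [FiniteDimensional ℂ V] (ρ : Representation ℂ A V) :
    ∃ m : {ψ : A → ℂ // IsIrrChar A ψ} → ℤ,
      ∀ g, ρ.character g = ∑ i, (m i : ℂ) * (i : A → ℂ) g := by
  obtain ⟨l, h1, h2⟩ := decomp A V ρ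
  refine ⟨fun i => l.count (i : A → ℂ), fun g => ?_⟩
  have h3 : l.sum = ∑ i : {ψ : A → ℂ // IsIrrChar A ψ}, l.count (i : A → ℂ) • (i : A → ℂ) := by
    clear h2
    induction l using Multiset.induction_on with
    | empty => simp
    | cons a s ih =>
      rw [Multiset.sum_cons, ih fun ψ hψ => h1 ψ (Multiset.mem_cons_of_mem hψ)]
      simp_rw [Multiset.count_cons, add_smul]
      rw [Finset.sum_add_distrib, add_comm]
      congr 1
      rw [Finset.sum_eq_single ⟨a, h1 a (Multiset.mem_cons_self a s)⟩]
      · simp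
      · intro b _ hb
        have : (b : A → ℂ) ≠ a := fun h => hb (Subtype.ext h)
        simp [this]
      · simp
  rw [h2, h3]
  simp

theorem core (A : Type) [Group A] [Fintype A] (V : Type) [AddCommGroup V] [Module ℂ V]
    [FiniteDimensional ℂ V] (ρ : Representation ℂ A V) (D : ℕ)
    (hD : ∀ (ψ : A → ℂ) (n : ℕ), IsIrrChar A ψ → ψ 1 = n → n ≤ D)
    (hne : ∃ h : A, h ≠ 1 ∧ ρ.character h ≠ 0) :
    (Fintype.card A : ℝ) - D ≤
      D * ∑ g ∈ Finset.univ.filter (fun g : A => g ≠ 1), ‖ρ.character g‖ ^ 2 := by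
  have : Fintype {ψ : A → ℂ // IsIrrChar A ψ} := (irr_finite A).fintype
  choose dg hdg1 hdg2 hdg3 using fun i : {ψ : A → ℂ // IsIrrChar A ψ} => irr_deg A i.1 i.2
  obtain ⟨m, hm⟩ := decomp' A V ρ
  obtain ⟨b, hb⟩ := decomp' A _ (Representation.linHom ρ ρ)
  obtain ⟨r, hr⟩ := decomp' A _ (regRep A)
  have orth : ∀ i j : {ψ : A → ℂ // IsIrrChar A ψ}, ∑ g, i.1 g * star (j.1 g)
      = if i = j then (((Fintype.card A : ℝ)) : ℂ) else 0 := by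
    intro i j
    rw [irr_orth A _ _ i.2 j.2]
    simp [Subtype.ext_iff]
  have hn : (0 : ℝ) < Fintype.card A := by exact_mod_cast Fintype.card_pos
  have hrd : ∀ i, (r i : ℂ) = dg i := by
    intro i
    have h1 := inner_exp _ (fun (i : {ψ : A → ℂ // IsIrrChar A ψ}) => i.1) orth
      (fun i => (r i : ℂ)) i
    simp_rw [← hr, regRep_char] at h1
    have hn' : (Fintype.card A : ℂ) ≠ 0 := by exact_mod_cast hn.ne'
    simpa [hdg2, hn'] using h1.symm
  refine core_abs (Fintype.card A : ℝ) hn 1 (fun i : {ψ : A → ℂ // IsIrrChar A ψ} => i.1) dg D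
    ρ.character m b ⟨_, irr_triv A⟩ orth (fun i g => hdg3 i g) hdg2 ?_ hm ?_ (fun g => rfl) hdg1
    (fun i => hD _ _ i.2 (hdg2 i)) hne
  · intro g
    simp_rw [← hrd]
    rw [← hr, regRep_char]
    simp
  · intro g
    rw [← hb, Representation.char_linHom, (char_basic A V ρ g).1, mul_comm]

theorem col_bound (A : Type) [Group A] [Fintype A] (k : ℕ) (χ : Fin k → A → ℂ)
    (hirr : ∀ i, IsIrrChar A (χ i)) (hinj : Function.Injective χ) (h : A) :
    ∑ i, ‖χ i h‖ ^ 2 ≤ (Nat.card (Subgroup.centralizer {h}) : ℝ) := by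
  set s := ∑ i, ‖χ i h‖ ^ 2 with hs
  have hs0 : 0 ≤ s := Finset.sum_nonneg fun i _ => sq_nonneg _
  have orth : ∀ i j, ∑ g, χ i g * star (χ j g)
      = if i = j then (Fintype.card A : ℂ) else 0 := by
    intro i j
    rw [irr_orth A _ _ (hirr i) (hirr j)]
    simp [hinj.eq_iff]
  let F : A → ℂ := fun g => ∑ i, star (χ i h) * χ i g
  have hconj : ∀ i g x, χ i (x * g * x⁻¹) = χ i g := by
    intro i g x
    obtain ⟨V, _, hV⟩ := hirr i
    rw [hV, hV, FDRep.char_conj]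
  have hFh : F h = s := by
    simp only [F, hs]
    push_cast
    exact Finset.sum_congr rfl fun i _ => Complex.conj_mul' _
  have hpar : ∑ g, ‖F g‖ ^ 2 = Fintype.card A * s := by
    have h1 : ∀ g, ((‖F g‖ ^ 2 : ℝ) : ℂ) = ∑ i, χ i h * (F g * star (χ i g)) := by
      intro g
      have : ((‖F g‖ ^ 2 : ℝ) : ℂ) = F g * star (F g) := by
        rw [Complex.ofReal_pow]; exact (Complex.mul_conj' _).symm
      rw [this]
      conv_lhs => rw [show star (F g) = ∑ i, χ i h * star (χ i g) by simp [F]]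
      rw [Finset.mul_sum]
      exact Finset.sum_congr rfl fun i _ => by ring
    have h2 : ((∑ g, ‖F g‖ ^ 2 : ℝ) : ℂ) = ((Fintype.card A * s : ℝ) : ℂ) := by
      rw [Complex.ofReal_sum]
      simp_rw [h1]
      rw [Finset.sum_comm]
      simp_rw [← Finset.mul_sum]
      have h3 : ∀ i, ∑ g, F g * star (χ i g) = Fintype.card A * star (χ i h) :=
        fun i => inner_exp _ χ orth (fun i => star (χ i h)) i
      simp_rw [h3]
      rw [hs]; push_cast; rw [Finset.mul_sum]
      refine Finset.sum_congr rfl fun i _ => ?_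
      rw [← Complex.mul_conj']; simp only [Complex.star_def]; ring
    exact_mod_cast h2
  let O : Finset A := Finset.univ.filter (fun g => g ∈ MulAction.orbit (ConjAct A) h)
  have hO : (O.card : ℝ) * Nat.card (Subgroup.centralizer {h}) = Fintype.card A := by
    have h1 := MulAction.card_orbit_mul_card_stabilizer_eq_card_group (ConjAct A) h
    rw [Subgroup.nat_card_centralizer_nat_card_stabilizer]
    have h2 : O.card = Fintype.card (MulAction.orbit (ConjAct A) h) :=
      (Fintype.card_subtype _).symm
    have h3 : Fintype.card (ConjAct A) = Fintype.card A := ConjAct.card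
    rw [h2, Nat.card_eq_fintype_card, ← h3, ← h1]
    push_cast; rfl
  have hO1 : (O.card : ℝ) * s ^ 2 ≤ Fintype.card A * s := by
    rw [← hpar]
    calc (O.card : ℝ) * s ^ 2 = ∑ g ∈ O, s ^ 2 := by simp
      _ = ∑ g ∈ O, ‖F g‖ ^ 2 := by
        refine Finset.sum_congr rfl fun g hg => ?_
        have hg : g ∈ MulAction.orbit (ConjAct A) h := by simpa [O] using hg
        obtain ⟨x, rfl⟩ := hg
        have : F (x • h) = s := by
          rw [← hFh]
          simp only [F, ConjAct.smul_def, hconj]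
        change s ^ 2 = ‖F (x • h)‖ ^ 2
        rw [this, Complex.norm_real, Real.norm_eq_abs, sq_abs]
      _ ≤ _ := Finset.sum_le_sum_of_subset_of_nonneg (Finset.subset_univ _)
          fun g _ _ => sq_nonneg _
  have hOpos : (0 : ℝ) < O.card := by
    have : h ∈ O := Finset.mem_filter.mpr ⟨Finset.mem_univ _, MulAction.mem_orbit_self h⟩
    exact_mod_cast Finset.card_pos.mpr ⟨h, this⟩
  rcases hs0.eq_or_lt with h0 | h0
  · rw [← h0]; positivity
  · rw [← hO] at hO1
    have : (O.card : ℝ) * s * s ≤ O.card * Nat.card (Subgroup.centralizer {h}) * s := by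
      linarith [(by ring : (O.card : ℝ) * s ^ 2 = O.card * s * s)]
    exact le_of_mul_le_mul_left (le_of_mul_le_mul_right this h0) hOpos

/-- Corollary 3: a bound for `k₊(G,H)`. -/
theorem stmt9 (G : Type) [Group G] [Fintype G] (H : Subgroup G) (hH : H ≠ ⊥)
    (μ : ↥H → ℂ) (hμ : IsIrrChar ↥H μ) (d : ℕ) (hdeg : μ 1 = (d : ℂ))
    (hmax : IsGreatest {n : ℕ | ∃ ψ : ↥H → ℂ, IsIrrChar ↥H ψ ∧ ψ 1 = (n : ℂ)} d)
    (k : ℕ) (χ : Fin k → G → ℂ) (hirr : ∀ i, IsIrrChar G (χ i))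
    (hinj : Function.Injective χ) (hcompl : ∀ ψ : G → ℂ, IsIrrChar G ψ → ∃ i, ψ = χ i)
    (M : ℕ)
    (hM : IsGreatest {n : ℕ | ∃ h ∈ H, h ≠ 1 ∧ n = Nat.card (Subgroup.centralizer {h})} M) :
    ((Finset.univ.filter (fun i => ∃ h ∈ H, h ≠ 1 ∧ χ i h ≠ 0)).card : ℝ) ≤
      ((d : ℝ) * Fintype.card H - d) / ((Fintype.card H : ℝ) - d) * M := by
  have hdM : ∀ (ψ : H → ℂ) (n : ℕ), IsIrrChar H ψ → ψ 1 = n → n ≤ d :=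
    fun ψ n h1 h2 => hmax.2 ⟨ψ, h1, h2⟩
  have hd1 : 1 ≤ d := hdM _ 1 (irr_triv H) (by simp)
  have hn1 : 1 < Fintype.card H := by
    rw [Fintype.one_lt_card_iff_nontrivial]
    exact (Subgroup.nontrivial_iff_ne_bot H).mpr hH
  have hdsq : d ^ 2 ≤ Fintype.card H := by
    have h1 := irr_orth H μ μ hμ hμ
    simp only [if_true] at h1
    have h2 : ∑ g, ‖μ g‖ ^ 2 = (Fintype.card H : ℝ) := by
      have : ((∑ g, ‖μ g‖ ^ 2 : ℝ) : ℂ) = ((Fintype.card H : ℝ) : ℂ) := by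
        push_cast
        rw [← h1]
        exact Finset.sum_congr rfl fun g _ => (Complex.mul_conj' _).symm
      exact_mod_cast this
    have h3 := Finset.single_le_sum (f := fun g => ‖μ g‖ ^ 2) (fun g _ => sq_nonneg _)
      (Finset.mem_univ (1 : H))
    simp only [hdeg, h2] at h3
    simp only [Complex.norm_natCast] at h3
    exact_mod_cast h3
  have hdn : d < Fintype.card H := by
    rcases hd1.eq_or_lt with h | h
    · omega
    · nlinarith
  have hdnr : (0 : ℝ) < (Fintype.card H : ℝ) - d := by
    have : (d : ℝ) < Fintype.card H := by exact_mod_cast hdn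
    linarith
  set K := Finset.univ.filter (fun i => ∃ h ∈ H, h ≠ 1 ∧ χ i h ≠ 0) with hK
  let B : Finset H := Finset.univ.filter (fun g : H => g ≠ 1)
  have hK1 : ∀ i ∈ K, (Fintype.card H : ℝ) - d ≤ d * ∑ g ∈ B, ‖χ i g‖ ^ 2 := by
    intro i hi
    have hi : ∃ h ∈ H, h ≠ 1 ∧ χ i h ≠ 0 := by simpa [hK] using hi
    obtain ⟨V, _, hV⟩ := hirr i
    have hch : ∀ g : H, (Representation.character (V.ρ.comp H.subtype) g) = χ i g :=
      fun g => (hV g).symm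
    have := core H V (V.ρ.comp H.subtype) d hdM (by
      obtain ⟨h, hh, h1, h2⟩ := hi
      refine ⟨⟨h, hh⟩, fun h3 => h1 (congrArg Subtype.val h3), ?_⟩
      rw [hch]; exact h2)
    simp_rw [hch] at this
    convert this
  have hB : (B.card : ℝ) = Fintype.card H - 1 := by
    have h1 : B = Finset.univ.erase 1 := by simp [B, Finset.filter_ne']
    rw [h1, Finset.card_erase_of_mem (Finset.mem_univ _), Finset.card_univ, Nat.cast_sub hn1.le]
    simp
  have hcol : ∀ g ∈ B, ∑ i, ‖χ i g‖ ^ 2 ≤ (M : ℝ) := by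
    intro g hg
    have hg : g ≠ 1 := by simpa [B] using hg
    refine (col_bound G k χ hirr hinj g).trans ?_
    have : Nat.card (Subgroup.centralizer {(g : G)}) ≤ M :=
      hM.2 ⟨g, g.2, fun h => hg (Subtype.ext h), rfl⟩
    exact_mod_cast this
  have hmain : (K.card : ℝ) * ((Fintype.card H : ℝ) - d) ≤ d * ((Fintype.card H - 1) * M) := by
    calc (K.card : ℝ) * ((Fintype.card H : ℝ) - d)
        = ∑ i ∈ K, ((Fintype.card H : ℝ) - d) := by rw [Finset.sum_const, nsmul_eq_mul]
      _ ≤ ∑ i ∈ K, d * ∑ g ∈ B, ‖χ i g‖ ^ 2 := Finset.sum_le_sum hK1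
      _ ≤ ∑ i, d * ∑ g ∈ B, ‖χ i g‖ ^ 2 :=
        Finset.sum_le_sum_of_subset_of_nonneg (Finset.subset_univ _) fun i _ _ => by positivity
      _ = d * ∑ g ∈ B, ∑ i, ‖χ i g‖ ^ 2 := by rw [← Finset.mul_sum, Finset.sum_comm]
      _ ≤ d * ((Fintype.card H - 1) * M) := by
        gcongr
        rw [← hB, ← nsmul_eq_mul]
        exact Finset.sum_le_card_nsmul B _ _ hcol
  rw [div_mul_eq_mul_div, le_div_iff₀ hdnr]
  linarith
end

section
/- Let G be a Frobenius group with kernel K such that every irreducible character of G not containing K in its kernel has degree [G:K]. Then every non-trivial irreducible character of K is linear, and hence K is Abelian. -/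
open scoped BigOperators Classical

namespace FrobAux

open Module

/-- Elements outside the kernel act without fixed points on the kernel. -/
lemma frob_free {G : Type} [Group G] [Finite G] {K H : Subgroup G}
    (hF : IsFrobeniusWith K H) (g : G) (hg : g ∉ K) (y : G) (hy : y ∈ K)
    (hc : g * y = y * g) : y = 1 := by
  obtain ⟨hN, -, -, hC, hfix⟩ := hF
  obtain ⟨⟨k0, h⟩, hkh⟩ := hC.2 g
  simp only at hkh
  have hh1 : (h : G) ≠ 1 := by
    intro h1
    apply hg
    rw [← hkh, h1, mul_one]
    exact k0.2
  let φ : K → K := fun k => ⟨(k : G) * ((h : G) * (k : G)⁻¹ * (h : G)⁻¹),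
    K.mul_mem k.2 (hN.conj_mem _ (K.inv_mem k.2) _)⟩
  have hinj : Function.Injective φ := by
    intro a b hab
    have hab' : (a : G) * ((h : G) * (a : G)⁻¹ * (h : G)⁻¹)
        = (b : G) * ((h : G) * (b : G)⁻¹ * (h : G)⁻¹) := congrArg Subtype.val hab
    have h3 : (h : G) * ((b : G)⁻¹ * a) * (h : G)⁻¹ = (b : G)⁻¹ * a := by
      have h4 : (b : G)⁻¹ * a = (h : G) * (b : G)⁻¹ * (h : G)⁻¹ *
          ((h : G) * (a : G)⁻¹ * (h : G)⁻¹)⁻¹ := by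
        rw [eq_mul_inv_iff_mul_eq, mul_assoc, hab', inv_mul_cancel_left]
      rw [h4]
      conv_rhs => rw [← h4]
      rw [← h4]
      conv_rhs => rw [h4]
      group
    have := hfix h h.2 hh1 _ (K.mul_mem (K.inv_mem b.2) a.2) h3
    exact Subtype.ext (inv_mul_eq_one.mp this).symm
  obtain ⟨k, hk⟩ := (Finite.injective_iff_surjective.mp hinj) k0
  have hk' : (k : G) * ((h : G) * (k : G)⁻¹ * (h : G)⁻¹) = k0 := congrArg Subtype.val hk
  have hgk : g = (k : G) * h * (k : G)⁻¹ := by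
    rw [← hkh, ← hk']; group
  have h5 : (h : G) * ((k : G)⁻¹ * y * k) * (h : G)⁻¹ = (k : G)⁻¹ * y * k := by
    rw [mul_inv_eq_iff_eq_mul]
    have : (k : G)⁻¹ * (g * y) * k = (k : G)⁻¹ * (y * g) * k := by rw [hc]
    rw [hgk] at this
    simpa [mul_assoc] using this
  have h6 := hfix h h.2 hh1 _ (K.mul_mem (K.mul_mem (K.inv_mem k.2) hy) k.2) h5
  have h7 : y = (k : G) * ((k : G)⁻¹ * y * k) * (k : G)⁻¹ := by group
  rw [h7, h6]; simp

section rep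

variable {G V : Type} [Group G] [Fintype G] [AddCommGroup V] [Module ℂ V]
  [FiniteDimensional ℂ V] (ρ : Representation ℂ G V)

lemma sum_char [ρ.IsIrreducible] :
    ∑ g : G, ρ.character g * ρ.character g⁻¹ = (Nat.card G : ℂ) := by
  have hne : (Nat.card G : ℂ) ≠ 0 := by exact_mod_cast Nat.card_pos.ne'
  have : Invertible (Nat.card G : ℂ) := invertibleOfNonzero hne
  have := Representation.char_orthonormal ρ ρ
  rw [if_pos ⟨Representation.Equiv.refl ρ⟩] at this
  field_simp at this
  simpa using this

lemma isIrrChar [ρ.IsIrreducible] : IsIrrChar G ρ.character := by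
  refine ⟨FDRep.of ρ, ?_, fun g => rfl⟩
  rw [FDRep.simple_iff_char_is_norm_one]
  exact sum_char ρ

lemma schur [ρ.IsIrreducible] (T : V →ₗ[ℂ] V) (hT : ∀ g, T * ρ g = ρ g * T) :
    ∃ c : ℂ, T = c • (1 : V →ₗ[ℂ] V) := by
  let f : Representation.IntertwiningMap ρ ρ := ⟨T, fun g => hT g⟩
  obtain ⟨c, hc⟩ := (Representation.IsIrreducible.algebraMap_intertwiningMap_bijective_of_isAlgClosed
    (ρ := ρ)).2 f
  refine ⟨c, ?_⟩
  ext v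
  have := congrArg (fun F : Representation.IntertwiningMap ρ ρ => F v) hc
  exact this.symm

lemma schur_trace [ρ.IsIrreducible] (T : V →ₗ[ℂ] V) (hT : ∀ g, T * ρ g = ρ g * T) :
    (finrank ℂ V : ℂ) • T = (LinearMap.trace ℂ V T) • (1 : V →ₗ[ℂ] V) := by
  obtain ⟨c, rfl⟩ := schur ρ T hT
  rw [map_smul, LinearMap.trace_one, smul_smul, smul_eq_mul, mul_comm]

/-- Either `K` acts trivially, or the sum over `K` acts as zero. -/
lemma triv_or_zero [ρ.IsIrreducible] (K : Subgroup G) (hN : K.Normal) :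
    (∀ x ∈ K, ρ x = 1) ∨ ∑ x : K, ρ (x : G) = 0 := by
  let W : Subrepresentation ρ :=
    { toSubmodule := ⨅ x : K, LinearMap.ker (ρ (x : G) - 1)
      apply_mem_toSubmodule := by
        intro g v hv
        simp only [Submodule.mem_iInf, LinearMap.mem_ker, LinearMap.sub_apply,
          Module.End.one_apply, sub_eq_zero] at hv ⊢
        intro x
        have h1 := hv ⟨g⁻¹ * x * g, by simpa using hN.conj_mem x x.2 g⁻¹⟩
        simp only at h1
        have h2 : (x : G) * g = g * (g⁻¹ * x * g) := by group
        rw [← Module.End.mul_apply, ← map_mul, h2, map_mul, Module.End.mul_apply, h1] }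
  have hmem : ∀ v, v ∈ W ↔ ∀ x : K, ρ (x : G) v = v := by
    intro v
    change v ∈ (⨅ x : K, LinearMap.ker (ρ (x : G) - 1)) ↔ _
    simp only [Submodule.mem_iInf, LinearMap.mem_ker, LinearMap.sub_apply,
          Module.End.one_apply, sub_eq_zero]
  rcases eq_bot_or_eq_top W with h | h
  · right
    ext v
    have : (∑ x : K, ρ (x : G)) v ∈ W := by
      rw [hmem]
      intro y
      simp only [LinearMap.sum_apply, map_sum, ← Module.End.mul_apply, ← map_mul]
      exact Fintype.sum_equiv (Equiv.mulLeft y) _ _ (fun x => by simp)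
    rw [h] at this
    exact this
  · left
    intro x hx
    ext v
    exact (hmem v).1 (h ▸ trivial) ⟨x, hx⟩

lemma char_zero (K : Subgroup G) (hN : K.Normal) (g : G)
    (hfree : ∀ y ∈ K, g * y = y * g → y = 1)
    (h0 : ∑ x : K, ρ (x : G) = 0) : ρ.character g = 0 := by
  let φ : K → K := fun k => ⟨g⁻¹ * k * g * (k : G)⁻¹,
    K.mul_mem (by simpa using hN.conj_mem k k.2 g⁻¹) (K.inv_mem k.2)⟩
  have hinj : Function.Injective φ := by
    intro a b hab
    have hab' : g⁻¹ * a * g * (a : G)⁻¹ = g⁻¹ * b * g * (b : G)⁻¹ := congrArg Subtype.val hab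
    have h1 : (a : G) * g * (a : G)⁻¹ = b * g * (b : G)⁻¹ := by
      simpa [mul_assoc] using hab'
    have h2 : g * ((b : G)⁻¹ * a) = ((b : G)⁻¹ * a) * g := by
      rw [mul_inv_eq_iff_eq_mul] at h1
      rw [mul_assoc, h1]; group
    have := hfree _ (K.mul_mem (K.inv_mem b.2) a.2) h2
    exact Subtype.ext (inv_mul_eq_one.mp this).symm
  have hbij : Function.Bijective φ := Finite.injective_iff_bijective.mp hinj
  have h1 : ∑ k : K, ρ ((k : G) * g * (k : G)⁻¹) = 0 := by
    have : ∀ k : K, ρ ((k : G) * g * (k : G)⁻¹) = ρ g * ρ (φ k : G) := by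
      intro k
      rw [← map_mul]
      congr 1
      simp only [φ]; group
    simp only [this]
    rw [← Finset.mul_sum, hbij.sum_comp (fun x : K => ρ (x : G)), h0, mul_zero]
  have h2 := congrArg (LinearMap.trace ℂ V) h1
  rw [map_sum, map_zero] at h2
  have h3 : ∀ k : K, LinearMap.trace ℂ V (ρ ((k : G) * g * (k : G)⁻¹)) = ρ.character g :=
    fun k => Representation.char_conj ρ g k
  simp only [h3, Finset.sum_const, nsmul_eq_mul, Finset.card_univ] at h2
  have : (Fintype.card K : ℂ) ≠ 0 := by exact_mod_cast Fintype.card_ne_zero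
  exact (mul_eq_zero.mp h2).resolve_left this

lemma key [ρ.IsIrreducible] (K : Subgroup G) (hN : K.Normal)
    (hfree : ∀ g ∉ K, ∀ y ∈ K, g * y = y * g → y = 1)
    (hdeg : ∀ χ : G → ℂ, IsIrrChar G χ → ¬ (∀ x ∈ K, χ x = χ 1) → χ 1 = (K.index : ℂ)) :
    ∑ x : K, ∑ g : G, ρ (g * x * g⁻¹ * (x : G)⁻¹) =
      ((Nat.card K : ℂ) ^ 2) • (1 : V →ₗ[ℂ] V) +
        ((Nat.card G : ℂ) - Nat.card K) • ∑ x : K, ρ (x : G) := by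
  have hKG : (Nat.card K : ℂ) * K.index = Nat.card G := by exact_mod_cast K.card_mul_index
  rcases triv_or_zero ρ K hN with h | h
  · have h1 : ∀ x : K, ∀ g : G, ρ (g * x * g⁻¹ * (x : G)⁻¹) = 1 := fun x g =>
      h _ (K.mul_mem (hN.conj_mem _ x.2 _) (K.inv_mem x.2))
    have h2 : ∀ x : K, ρ (x : G) = 1 := fun x => h _ x.2
    simp only [h1, h2, Finset.sum_const, Finset.card_univ, ← Nat.card_eq_fintype_card,
      ← Nat.cast_smul_eq_nsmul ℂ, smul_smul, ← add_smul]
    congr 1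
    ring
  · rw [h, smul_zero, add_zero]
    have : Nontrivial V := by
      by_contra hn
      rw [not_nontrivial_iff_subsingleton] at hn
      exact bot_ne_top (α := Subrepresentation ρ)
        (SetLike.ext fun v => by rw [Subsingleton.elim v 0]; exact ⟨fun _ => trivial, fun _ => rfl⟩)
    have hd0 : (finrank ℂ V : ℂ) ≠ 0 := by exact_mod_cast (finrank_pos (R := ℂ) (M := V)).ne'
    have hK0 : (Nat.card K : ℂ) ≠ 0 := by exact_mod_cast Nat.card_pos.ne'
    have hd : (finrank ℂ V : ℂ) = K.index := by
      rw [← Representation.char_one ρ]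
      apply hdeg _ (isIrrChar ρ)
      intro hall
      have h2 := congrArg (LinearMap.trace ℂ V) h
      rw [map_sum, map_zero] at h2
      have h3 : ∀ x : K, LinearMap.trace ℂ V (ρ (x : G)) = finrank ℂ V := fun x => by
        rw [← Representation.char_one ρ]; exact hall x x.2
      simp only [h3, Finset.sum_const, nsmul_eq_mul, Finset.card_univ,
        ← Nat.card_eq_fintype_card] at h2
      exact mul_ne_zero hK0 hd0 h2
    have hvan : ∀ g ∉ K, ρ.character g = 0 := fun g hg => char_zero ρ K hN g (hfree g hg) h
    -- conjugation sums
    have hZ : ∀ x : G, (finrank ℂ V : ℂ) • ∑ g : G, ρ (g * x * g⁻¹)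
        = ((Nat.card G : ℂ) * ρ.character x) • (1 : V →ₗ[ℂ] V) := by
      intro x
      rw [schur_trace ρ]
      · congr 1
        rw [map_sum]
        have h3 : ∀ g : G, LinearMap.trace ℂ V (ρ (g * x * g⁻¹)) = ρ.character x :=
          fun g => Representation.char_conj ρ x g
        simp only [h3, Finset.sum_const, nsmul_eq_mul, Finset.card_univ,
          ← Nat.card_eq_fintype_card]
      · intro y
        rw [Finset.sum_mul, Finset.mul_sum]
        simp only [← map_mul]
        exact Fintype.sum_equiv (Equiv.mulLeft y⁻¹) _ _ (fun g => by
          congr 1; simp only [Equiv.coe_mulLeft]; group)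
    have hC : (finrank ℂ V : ℂ) • ∑ x : G, ρ.character x • ρ x⁻¹
        = (Nat.card G : ℂ) • (1 : V →ₗ[ℂ] V) := by
      rw [schur_trace ρ]
      · congr 1
        rw [map_sum, ← sum_char ρ]
        simp only [map_smul, smul_eq_mul]
        rfl
      · intro y
        rw [Finset.sum_mul, Finset.mul_sum]
        simp only [smul_mul_assoc, mul_smul_comm, ← map_mul]
        refine Fintype.sum_equiv (MulAut.conj y⁻¹ : G ≃* G).toEquiv _ _ (fun g => ?_)
        have e : (MulAut.conj y⁻¹ : G ≃* G).toEquiv g = y⁻¹ * g * y := by simp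
        rw [e]
        congr 1
        · have := Representation.char_conj ρ g y⁻¹
          rw [inv_inv] at this
          exact this.symm
        · congr 1; group
    have hCK : ∑ x : K, ρ.character (x : G) • ρ (x : G)⁻¹ = ∑ x : G, ρ.character x • ρ x⁻¹ := by
      rw [← Finset.sum_subset (Finset.subset_univ (Finset.univ.filter (· ∈ K)))]
      · exact (Finset.sum_subtype _ (by simp) (fun x : G => ρ.character x • ρ x⁻¹)).symm
      · intro x _ hx
        rw [hvan x (by simpa using hx), zero_smul]
    have e1 : ∑ x : K, ∑ g : G, ρ (g * x * g⁻¹ * (x : G)⁻¹)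
        = ∑ x : K, (∑ g : G, ρ (g * x * g⁻¹)) * ρ (x : G)⁻¹ := by
      refine Finset.sum_congr rfl fun x _ => ?_
      rw [Finset.sum_mul]
      exact Finset.sum_congr rfl fun g _ => map_mul _ _ _
    have e2 : ((finrank ℂ V : ℂ) * finrank ℂ V) • ∑ x : K, ∑ g : G, ρ (g * x * g⁻¹ * (x : G)⁻¹)
        = ((Nat.card G : ℂ) * Nat.card G) • (1 : V →ₗ[ℂ] V) := by
      rw [e1, mul_smul, Finset.smul_sum]
      simp only [← smul_mul_assoc, hZ]
      simp only [smul_mul_assoc, one_mul]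
      simp only [mul_smul]
      rw [← Finset.smul_sum, hCK, smul_comm, hC]
    have hdd := mul_ne_zero hd0 hd0
    rw [← inv_smul_smul₀ hdd (∑ x : K, ∑ g : G, ρ (g * x * g⁻¹ * (x : G)⁻¹)), e2, smul_smul,
      ← hKG, ← hd]
    congr 1
    field_simp

end rep

/-- An element killing all irreducible representations kills all simple modules. -/
lemma smul_eq_zero_of_irr {G : Type} [Group G] [Fintype G] (a : MonoidAlgebra ℂ G)
    (ha : ∀ (V : Type) [AddCommGroup V] [Module ℂ V] [FiniteDimensional ℂ V]
      (ρ : Representation ℂ G V) [ρ.IsIrreducible], ρ.asAlgebraHom a = 0)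
    (M : Type) [AddCommGroup M] [Module (MonoidAlgebra ℂ G) M]
    [IsSimpleModule (MonoidAlgebra ℂ G) M] (x : M) : a • x = 0 := by
  have : Nontrivial M := IsSimpleModule.nontrivial (MonoidAlgebra ℂ G) M
  obtain ⟨y, hy⟩ := exists_ne (0 : M)
  have hsurj := IsSimpleModule.toSpanSingleton_surjective (MonoidAlgebra ℂ G) hy
  letI : Module ℂ M := Module.compHom M (algebraMap ℂ (MonoidAlgebra ℂ G))
  have htower : IsScalarTower ℂ (MonoidAlgebra ℂ G) M := ⟨fun c b z => by
    rw [Algebra.smul_def, mul_smul]; rfl⟩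
  have : FiniteDimensional ℂ M :=
    Module.Finite.of_surjective
      ((LinearMap.toSpanSingleton (MonoidAlgebra ℂ G) M y).restrictScalars ℂ) hsurj
  let ρ : Representation ℂ G M := Representation.ofModule' M
  have hρ : ∀ b : MonoidAlgebra ℂ G, ∀ z : M, ρ.asAlgebraHom b z = b • z := by
    have e : ρ.asAlgebraHom = Algebra.lsmul ℂ ℂ M :=
      (MonoidAlgebra.lift ℂ _ G).apply_symm_apply _
    intro b z
    rw [e]; rfl
  let E : ρ.asModule ≃ₗ[MonoidAlgebra ℂ G] M :=
    { ρ.asModuleEquiv.toAddEquiv with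
      map_smul' := fun b z => hρ b z }
  have : ρ.IsIrreducible :=
    (Representation.irreducible_iff_isSimpleModule_asModule ρ).mpr (IsSimpleModule.congr E)
  have h := ha _ ρ
  rw [← hρ, h]; rfl

/-- An element of the group algebra killing all irreducible representations is zero. -/
lemma eq_zero_of_irr {G : Type} [Group G] [Fintype G] (a : MonoidAlgebra ℂ G)
    (ha : ∀ (V : Type) [AddCommGroup V] [Module ℂ V] [FiniteDimensional ℂ V]
      (ρ : Representation ℂ G V) [ρ.IsIrreducible], ρ.asAlgebraHom a = 0) : a = 0 := by
  have : NeZero (Nat.card G : ℂ) := ⟨by exact_mod_cast Nat.card_pos.ne'⟩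
  have hj : Ring.jacobson (MonoidAlgebra ℂ G) = ⊥ := IsSemisimpleRing.jacobson_eq_bot _
  suffices a ∈ Ring.jacobson (MonoidAlgebra ℂ G) by
    rw [hj] at this; exact this
  rw [Ring.jacobson_eq_sInf_isMaximal, Submodule.mem_sInf]
  intro m hm
  have hm' : Ideal.IsMaximal m := hm
  have : IsSimpleModule (MonoidAlgebra ℂ G) (MonoidAlgebra ℂ G ⧸ m) :=
    isSimpleModule_iff_isCoatom.mpr hm'.out
  have h2 := smul_eq_zero_of_irr a ha (MonoidAlgebra ℂ G ⧸ m) (Submodule.Quotient.mk 1)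
  rw [← Submodule.Quotient.mk_smul, smul_eq_mul, mul_one] at h2
  exact (Submodule.Quotient.mk_eq_zero m).mp h2

lemma count {G : Type} [Group G] [Fintype G] (K : Subgroup G) (hN : K.Normal)
    (hfree : ∀ g ∉ K, ∀ y ∈ K, g * y = y * g → y = 1)
    (hdeg : ∀ χ : G → ℂ, IsIrrChar G χ → ¬ (∀ x ∈ K, χ x = χ 1) → χ 1 = (K.index : ℂ)) :
    ∑ x : K, (Finset.univ.filter fun g : G => g * x = x * g).card + Nat.card K
      = Nat.card K ^ 2 + Nat.card G := by
  have h := eq_zero_of_irr (G := G) (∑ x : K, ∑ g : G, MonoidAlgebra.single (g * x * g⁻¹ * (x : G)⁻¹) 1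
      - (((Nat.card K : ℂ) ^ 2) • (1 : MonoidAlgebra ℂ G) +
        ((Nat.card G : ℂ) - Nat.card K) • ∑ x : K, MonoidAlgebra.single (x : G) 1)) (by
    intro V _ _ _ ρ _
    simp only [map_sub, map_add, map_sum, map_smul, map_one,
      Representation.asAlgebraHom_single_one]
    rw [key ρ K hN hfree hdeg, sub_self])
  have h1 := congrArg (fun a => MonoidAlgebra.coeff a 1) (sub_eq_zero.mp h)
  have e1 : ∀ (x : K) (g : G), (g * (x : G) * g⁻¹ * (x : G)⁻¹ = 1) ↔ g * x = x * g := by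
    intro x g
    rw [mul_inv_eq_one, mul_inv_eq_iff_eq_mul]
  simp only [MonoidAlgebra.coeff_sum, MonoidAlgebra.coeff_add, MonoidAlgebra.coeff_smul,
    Finsupp.add_apply, Finsupp.smul_apply, Finsupp.finsetSum_apply,
    MonoidAlgebra.coeff_single_apply, MonoidAlgebra.coeff_one_one, e1, Finset.sum_boole,
    smul_eq_mul, mul_one] at h1
  have e2 : (Finset.univ.filter fun x : K => (x : G) = 1).card = 1 := by
    rw [Finset.card_eq_one]
    exact ⟨1, by ext; simp⟩
  rw [e2] at h1
  have h2 : ((∑ x : K, (Finset.univ.filter fun g : G => g * x = x * g).card + Nat.card K : ℕ) : ℂ)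
      = ((Nat.card K ^ 2 + Nat.card G : ℕ) : ℂ) := by
    push_cast
    rw [h1]
    push_cast
    ring
  exact_mod_cast h2

lemma comm {G : Type} [Group G] [Fintype G] (K : Subgroup G) (hN : K.Normal)
    (hfree : ∀ g ∉ K, ∀ y ∈ K, g * y = y * g → y = 1)
    (hdeg : ∀ χ : G → ℂ, IsIrrChar G χ → ¬ (∀ x ∈ K, χ x = χ 1) → χ 1 = (K.index : ℂ)) :
    ∀ x ∈ K, ∀ y ∈ K, x * y = y * x := by
  have hc := count K hN hfree hdeg
  have h1 : (Finset.univ.filter fun g : G => g * ((1 : K) : G) = ((1 : K) : G) * g).card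
      = Nat.card G := by simp
  rw [← Finset.add_sum_erase _ _ (Finset.mem_univ (1 : K)), h1] at hc
  have hKc : (Finset.univ.filter fun g : G => g ∈ K).card = Nat.card K := by
    rw [Nat.card_eq_fintype_card, Fintype.card_subtype]
  have hsub : ∀ x ∈ Finset.univ.erase (1 : K),
      (Finset.univ.filter fun g : G => g * x = x * g) ⊆ Finset.univ.filter fun g : G => g ∈ K := by
    intro x hx g hg
    simp only [Finset.mem_filter, Finset.mem_univ, true_and] at hg ⊢
    by_contra hgK
    exact (Finset.mem_erase.mp hx).1 (Subtype.ext (hfree g hgK x x.2 hg))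
  have hle : ∀ x ∈ Finset.univ.erase (1 : K),
      (Finset.univ.filter fun g : G => g * x = x * g).card ≤ Nat.card K := by
    intro x hx
    rw [← hKc]
    exact Finset.card_le_card (hsub x hx)
  have hsum : ∑ x ∈ Finset.univ.erase (1 : K),
      (Finset.univ.filter fun g : G => g * x = x * g).card
      = ∑ x ∈ Finset.univ.erase (1 : K), Nat.card K := by
    rw [Finset.sum_const, Finset.card_erase_of_mem (Finset.mem_univ _), Finset.card_univ,
      ← Nat.card_eq_fintype_card, smul_eq_mul, Nat.sub_mul, one_mul]
    rw [pow_two] at hc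
    omega
  have heq := (Finset.sum_eq_sum_iff_of_le hle).mp hsum
  intro x hx y hy
  by_cases hx1 : x = 1
  · simp [hx1]
  have hx' : (⟨x, hx⟩ : K) ∈ Finset.univ.erase (1 : K) :=
    Finset.mem_erase.mpr ⟨fun h => hx1 (congrArg Subtype.val h), Finset.mem_univ _⟩
  have := Finset.eq_of_subset_of_card_le (hsub _ hx') (by rw [heq _ hx', hKc])
  have hy' : y ∈ Finset.univ.filter fun g : G => g ∈ K := by simpa using hy
  rw [← this] at hy'
  simpa using (Finset.mem_filter.mp hy').2.symm

lemma linear_of_comm {A : Type} [Group A] [Fintype A] (hA : ∀ x y : A, x * y = y * x)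
    (ψ : A → ℂ) (hψ : IsIrrChar A ψ) : ψ 1 = 1 := by
  obtain ⟨V, hV, hψ⟩ := hψ
  have hne : (Nat.card A : ℂ) ≠ 0 := by exact_mod_cast Nat.card_pos.ne'
  have : Invertible (Nat.card A : ℂ) := invertibleOfNonzero hne
  have h1 := (FDRep.simple_iff_char_is_norm_one V).mp hV
  have h2 := Representation.card_inv_mul_sum_char_mul_char_eq_finrank
    (ρ := (V.ρ : Representation ℂ A V)) (σ := V.ρ)
  have h3 : finrank ℂ (Representation.IntertwiningMap (V.ρ : Representation ℂ A V) V.ρ) = 1 := by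
    have h4 : (Nat.card A : ℂ)⁻¹ * ∑ g : A, V.character g * V.character g⁻¹ = _ := h2
    rw [h1, inv_mul_cancel₀ hne] at h4
    exact_mod_cast h4.symm
  have hscal : ∀ g : A, ∃ c : ℂ, ∀ v, V.ρ g v = c • v := by
    intro g
    let f : Representation.IntertwiningMap (V.ρ : Representation ℂ A V) V.ρ := ⟨V.ρ g, fun x => by
      change V.ρ g * V.ρ x = V.ρ x * V.ρ g
      rw [← map_mul, ← map_mul, hA]⟩
    let i : Representation.IntertwiningMap (V.ρ : Representation ℂ A V) V.ρ := 1
    have hi : i ≠ 0 := by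
      intro h0
      have hz : ∀ j : Representation.IntertwiningMap (V.ρ : Representation ℂ A V) V.ρ, j = 0 := by
        intro j
        have : j = j * i := (mul_one j).symm
        rw [this, h0, mul_zero]
      have : Subsingleton (Representation.IntertwiningMap (V.ρ : Representation ℂ A V) V.ρ) :=
        ⟨fun a b => (hz a).trans (hz b).symm⟩
      rw [finrank_zero_of_subsingleton] at h3
      exact zero_ne_one h3
    obtain ⟨c, hc⟩ := (finrank_eq_one_iff_of_nonzero' i hi).mp h3 f
    refine ⟨c, fun v => ?_⟩
    exact (congrArg (fun F : Representation.IntertwiningMap (V.ρ : Representation ℂ A V) V.ρ => F v)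
      hc).symm
  let L : (V →ₗ[ℂ] V) →ₗ[ℂ] Representation.IntertwiningMap (V.ρ : Representation ℂ A V) V.ρ :=
    { toFun := fun T => ⟨T, fun g => by
        obtain ⟨c, hc⟩ := hscal g
        ext v
        simp [hc]⟩
      map_add' := fun _ _ => rfl
      map_smul' := fun _ _ => rfl }
  have hL : Function.Bijective L := by
    constructor
    · intro S T h
      exact congrArg (fun F => F.toLinearMap) h
    · intro F
      exact ⟨F.toLinearMap, rfl⟩
  have h5 := (LinearEquiv.ofBijective L hL).finrank_eq
  rw [h3, Module.finrank_linearMap] at h5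
  rw [hψ 1, FDRep.char_one]
  have : finrank ℂ V = 1 := Nat.eq_one_of_mul_eq_one_left h5
  exact_mod_cast this

end FrobAux

/-- If every irreducible character of the Frobenius group `G` not containing the kernel `K` in
its kernel has degree `[G:K]`, then every non-trivial irreducible character of `K` is linear and
`K` is Abelian. -/
theorem stmt18 (G : Type) [Group G] [Fintype G] (K H : Subgroup G)
    (hF : IsFrobeniusWith K H)
    (hdeg : ∀ χ : G → ℂ, IsIrrChar G χ → ¬ (∀ x ∈ K, χ x = χ 1) → χ 1 = (K.index : ℂ)) :
    (∀ ψ : ↥K → ℂ, IsIrrChar ↥K ψ → ψ ≠ (fun _ => 1) → ψ 1 = 1) ∧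
      ∀ x ∈ K, ∀ y ∈ K, x * y = y * x := by
  have hcomm := FrobAux.comm K hF.1 (fun g hg y hy h => FrobAux.frob_free hF g hg y hy h) hdeg
  refine ⟨fun ψ hψ _ => ?_, hcomm⟩
  exact FrobAux.linear_of_comm (fun x y => Subtype.ext (hcomm x x.2 y y.2)) ψ hψ
end
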